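/- There exists ε₀ > 0 such that for every ε with 0 < ε < ε₀ the following holds in the ε-instance: if X' = (X'_1, X'_2, X'_3) is a complete EFX allocation with X'_3 ∩ {g_5, g_6, g_7} = {g_6} and the goods g_3 and g_5 are allocated one to agent 1 and one to agent 2 (i.e., either g_3 ∈ X'_1 and g_5 ∈ X'_2, or g_3 ∈ X'_2 and g_5 ∈ X'_1), then v_1(X'_1)·v_2(X'_2)·v_3(X'_3) < (10 + 2ε^5)·(10 + ε)·10. -/

import Mathlib

open Finset

/-- Additive value of a bundle `S` under per-good valuation `v`. -/
noncomputable def val {G : Type*} (v : G → ℝ) (S : Finset G) : ℝ := ∑ g ∈ S, v g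

/-- `X` is EFX: no agent `i` strongly envies agent `j`, i.e. for every good `g`
in `X j`, `v_i(X_i) ≥ v_i(X_j \ {g})`. -/
def EFX {G : Type*} [DecidableEq G] (v : Fin 3 → G → ℝ) (X : Fin 3 → Finset G) : Prop :=
  ∀ i j : Fin 3, ∀ g ∈ X j, val (v i) (X j \ {g}) ≤ val (v i) (X i)

/-- The valuations of the ε-instance: agent `i`'s value for good `g_{k+1}` is `vE ε i k`. -/
noncomputable def vE (ε : ℝ) : Fin 3 → Fin 7 → ℝ :=
  ![![ε ^ 3 + 6 * ε ^ 5, 2 * ε ^ 5, 10 - ε ^ 3, ε ^ 3, 10 - 2 * ε ^ 3,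
      10 + 3 * ε ^ 5, ε ^ 5],
    ![ε, 0, 10 - ε ^ 2 + ε ^ 6, 2 * ε ^ 2, 10, 0, ε - ε ^ 2],
    ![0, 0, 0, 0, 10 - ε ^ 4, 10, 2 * ε ^ 4]]

/-- The partial allocation `X₁ = {g₂,g₃,g₄}`, `X₂ = {g₁,g₅}`, `X₃ = {g₆}` (goods are
`0`-indexed: good `g_{k+1}` is `k : Fin 7`). -/
def XT : Fin 3 → Finset (Fin 7) :=
  ![{1, 2, 3}, {0, 4}, {5}]

/-!
Agent 3's bundle is worth exactly `10`, so agents 1 and 2 have to be kept below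
`(10 + 2ε⁵)(10 + ε)`. If `X'₁` holds `g₃` and `X'₂` holds `g₅`, agent 1 exceeds `10` by at most the
order of `ε³`, so agent 2 must reach `10 + ε`, which takes `g₁` and not `g₇`: EFX for agent 3, who
values `{g₅, g₇}` at `10 + ε⁴`, leaves nothing to be added to that pair. But if agent 2 gets `g₁`
and agent 1 gets `g₇`, EFX between these two caps their values at `10 + ε` and `10 + ε⁵`. If `X'₁`
holds `g₅` and `X'₂` holds `g₃`, EFX for agents 1 and 3 forces `g₇` to agent 2 and keeps `g₁` from
agent 2, and `g₄` cannot help both: without it agent 1 loses a term of order `ε³`, or agent 2 one of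
order `ε²`.
-/

theorem pow_succ_lt_pow_mul {R : Type*} [Semiring R] [PartialOrder R] [IsStrictOrderedRing R]
    {a b : R} (ha : 0 < a) (hab : a < b) (k : ℕ) : a ^ (k + 1) < a ^ k * b := by
  rw [pow_succ]
  exact mul_lt_mul_of_pos_left hab (pow_pos ha k)

section Allocations

variable {G : Type*}

theorem val_nonneg {v : G → ℝ} (hv : ∀ g, 0 ≤ v g) (S : Finset G) : 0 ≤ val v S :=
  sum_nonneg fun g _ => hv g

theorem val_mono {v : G → ℝ} (hv : ∀ g, 0 ≤ v g) : Monotone (_root_.val v) :=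
  fun _ _ h => sum_le_sum_of_subset_of_nonneg h fun g _ _ => hv g

theorem val_mul_val_lt_of_le {v w : G → ℝ} (hv : ∀ g, 0 ≤ v g) (hw : ∀ g, 0 ≤ w g)
    {S T : Finset G} {a b c : ℝ} (ha : val v S ≤ a) (hb : val w T ≤ b) (hc : a * b < c) :
    val v S * val w T < c :=
  (mul_le_mul ha hb (val_nonneg hw T) ((val_nonneg hv S).trans ha)).trans_lt hc

theorem EFX.eq_of_val_lt [DecidableEq G] {v : Fin 3 → G → ℝ} {X : Fin 3 → Finset G} (hX : EFX v X)
    {i j : Fin 3} (hv : ∀ g, 0 ≤ v i g) {T : Finset G} (hT : T ⊆ X j)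
    (hlt : val (v i) (X i) < val (v i) T) : X j = T := by
  by_contra hne
  obtain ⟨g, hg, hgT⟩ := exists_of_ssubset (hT.ssubset_of_ne (Ne.symm hne))
  have hsub : T ⊆ X j \ {g} := subset_sdiff.2 ⟨hT, disjoint_singleton_right.2 hgT⟩
  exact hlt.not_ge ((val_mono hv hsub).trans (hX i j g hg))

variable {ι : Type*} [Fintype G] [DecidableEq ι]

/-- The bundle of agent `i` in the complete allocation that gives each good `g` to agent `f g`.
Describing complete allocations by the assignment `f` makes disjointness and completeness
automatic. -/
def bundle (f : G → ι) (i : ι) : Finset G := {g | f g = i}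

theorem mem_bundle {f : G → ι} {i : ι} {g : G} : g ∈ bundle f i ↔ f g = i := by
  simp [bundle]

theorem exists_eq_bundle {X : ι → Finset G} (hdisj : Pairwise fun i j => Disjoint (X i) (X j))
    (hcover : ∀ g, ∃ i, g ∈ X i) : ∃ f : G → ι, X = bundle f := by
  choose f hf using hcover
  refine ⟨f, funext fun i => Finset.ext fun g => ⟨fun hg => mem_bundle.2 ?_, fun hg => ?_⟩⟩
  · by_contra hne
    exact disjoint_left.1 (hdisj hne) (hf g) hg
  · exact mem_bundle.1 hg ▸ hf g

theorem val_bundle_le {v : G → ℝ} (hv : ∀ g, 0 ≤ v g) {f : G → ι} {i : ι} {T : Finset G}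
    (hT : ∀ g, f g = i → g ∈ T) : val v (bundle f i) ≤ val v T :=
  val_mono hv fun g hg => hT g (mem_bundle.1 hg)

end Allocations

section Instance

-- Names count goods and agents from 1: `hg5 : f 4 = 1` says that `g₅` goes to agent 2.
variable {ε : ℝ} {f : Fin 7 → Fin 3}

theorem vE_nonneg (hε : ε ∈ Set.Ioo 0 (1 / 10)) (i : Fin 3) (g : Fin 7) : 0 ≤ vE ε i g := by
  have hlt := pow_succ_lt_pow_mul hε.1 hε.2
  have hpos := fun k => pow_pos hε.1 k
  fin_cases i <;> fin_cases g <;> simp [vE] <;>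
    linarith [hlt 0, hlt 1, hlt 2, hlt 3, hpos 1, hpos 2, hpos 3, hpos 4, hpos 5, hpos 6]

theorem val_bundle_agent3 (hg5 : f 4 ≠ 2) (hg6 : f 5 = 2) (hg7 : f 6 ≠ 2) :
    val (vE ε 2) (bundle f 2) = 10 := by
  simp [_root_.val, bundle, sum_filter, Fin.sum_univ_seven, vE, hg5, hg6, hg7]

theorem bundle_eq_of_g5_g7 (hε : ε ∈ Set.Ioo 0 (1 / 10)) (hX : EFX (vE ε) (bundle f)) {i : Fin 3}
    (hi : i ≠ 2) (hg5 : f 4 = i) (hg6 : f 5 = 2) (hg7 : f 6 = i) : bundle f i = {4, 6} := by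
  have hown : val (vE ε 2) (bundle f 2) = 10 := val_bundle_agent3 (hg5 ▸ hi) hg6 (hg7 ▸ hi)
  have hpair : val (vE ε 2) {4, 6} = 10 + ε ^ 4 := by simp [_root_.val, vE]; ring
  refine hX.eq_of_val_lt (vE_nonneg hε 2) (by simp [insert_subset_iff, mem_bundle, hg5, hg7]) ?_
  rw [hown, hpair]
  linarith [pow_pos hε.1 4]

theorem val_mul_val_lt_of_agent2_deficit (hε : ε ∈ Set.Ioo 0 (1 / 10)) {S T : Finset (Fin 7)}
    (hv1 : val (vE ε 0) S ≤ 10 + 2 * ε ^ 3) (hv2 : val (vE ε 1) T ≤ 10 + ε - ε ^ 2) :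
    val (vE ε 0) S * val (vE ε 1) T < (10 + 2 * ε ^ 5) * (10 + ε) := by
  have hlt := pow_succ_lt_pow_mul hε.1 hε.2
  refine val_mul_val_lt_of_le (vE_nonneg hε 0) (vE_nonneg hε 1) hv1 hv2 ?_
  linarith [hlt 2, hlt 3, pow_pos hε.1 2, pow_pos hε.1 5, pow_pos hε.1 6]

theorem val_bundle_agent1_le (hε : ε ∈ Set.Ioo 0 (1 / 10)) (hg5 : f 4 ≠ 0) (hg6 : f 5 ≠ 0) :
    val (vE ε 0) (bundle f 0) ≤ 10 + 2 * ε ^ 3 := by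
  have hlt := pow_succ_lt_pow_mul hε.1 hε.2
  calc
    _ ≤ val (vE ε 0) {0, 1, 2, 3, 6} :=
      val_bundle_le (vE_nonneg hε 0) (by simp [Fin.forall_fin_succ, hg5, hg6])
    _ = 10 + ε ^ 3 + 9 * ε ^ 5 := by simp [_root_.val, vE]; ring
    _ ≤ _ := by linarith [hlt 3, hlt 4, pow_pos hε.1 3]

theorem val_mul_val_lt_of_agent2_g5_g7 (hε : ε ∈ Set.Ioo 0 (1 / 10)) (hX : EFX (vE ε) (bundle f))
    (hg5 : f 4 = 1) (hg6 : f 5 = 2) (hg7 : f 6 = 1) :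
    val (vE ε 0) (bundle f 0) * val (vE ε 1) (bundle f 1) < (10 + 2 * ε ^ 5) * (10 + ε) := by
  have hv2 : val (vE ε 1) (bundle f 1) = 10 + ε - ε ^ 2 := by
    rw [bundle_eq_of_g5_g7 hε hX (by decide) hg5 hg6 hg7]
    simp [_root_.val, vE]; ring
  have hv1 : val (vE ε 0) (bundle f 0) ≤ 10 + 2 * ε ^ 3 :=
    val_bundle_agent1_le hε (by simp [hg5]) (by simp [hg6])
  exact val_mul_val_lt_of_agent2_deficit hε hv1 hv2.le

theorem val_mul_val_lt_of_agent2_g5_not_g1_g3_g7 (hε : ε ∈ Set.Ioo 0 (1 / 10))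
    (hg1 : f 0 ≠ 1) (hg3 : f 2 ≠ 1) (hg5 : f 4 = 1) (hg6 : f 5 = 2) (hg7 : f 6 ≠ 1) :
    val (vE ε 0) (bundle f 0) * val (vE ε 1) (bundle f 1) < (10 + 2 * ε ^ 5) * (10 + ε) := by
  have hv2 : val (vE ε 1) (bundle f 1) ≤ 10 + ε - ε ^ 2 := calc
    _ ≤ val (vE ε 1) {1, 3, 4} :=
      val_bundle_le (vE_nonneg hε 1) (by simp [Fin.forall_fin_succ, hg1, hg3, hg6, hg7])
    _ = 10 + 2 * ε ^ 2 := by simp [_root_.val, vE]; ring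
    _ ≤ _ := by linarith [pow_succ_lt_pow_mul hε.1 hε.2 1, hε.1]
  have hv1 : val (vE ε 0) (bundle f 0) ≤ 10 + 2 * ε ^ 3 :=
    val_bundle_agent1_le hε (by simp [hg5]) (by simp [hg6])
  exact val_mul_val_lt_of_agent2_deficit hε hv1 hv2

theorem g4_not_agent2_of_agent2_g1_g5 (hε : ε ∈ Set.Ioo 0 (1 / 10)) (hX : EFX (vE ε) (bundle f))
    (hg1 : f 0 = 1) (hg5 : f 4 = 1) (hg6 : f 5 = 2) : f 3 ≠ 1 := by
  intro hg4
  have hv1 : val (vE ε 0) (bundle f 0) ≤ 10 - ε ^ 3 + 3 * ε ^ 5 := calc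
    _ ≤ val (vE ε 0) {1, 2, 6} :=
      val_bundle_le (vE_nonneg hε 0) (by simp [Fin.forall_fin_succ, hg1, hg4, hg5, hg6])
    _ = _ := by simp [_root_.val, vE]; ring
  have hpair : val (vE ε 0) {0, 4} = 10 - ε ^ 3 + 6 * ε ^ 5 := by simp [_root_.val, vE]; ring
  have hbundle : bundle f 1 = {0, 4} :=
    hX.eq_of_val_lt (vE_nonneg hε 0) (by simp [insert_subset_iff, mem_bundle, hg1, hg5])
      (by linarith [pow_pos hε.1 5])
  have hmem : 3 ∈ bundle f 1 := mem_bundle.2 hg4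
  simp [hbundle] at hmem

theorem val_bundle_agent1_le_of_agent2_g1_g5 (hε : ε ∈ Set.Ioo 0 (1 / 10))
    (hX : EFX (vE ε) (bundle f)) (hg1 : f 0 = 1) (hg3 : f 2 = 0) (hg5 : f 4 = 1) (hg6 : f 5 = 2)
    (hg7 : f 6 = 0) (hv2 : val (vE ε 1) (bundle f 1) ≤ 10 + ε) :
    val (vE ε 0) (bundle f 0) ≤ 10 + ε ^ 5 := by
  have hlt := pow_succ_lt_pow_mul hε.1 hε.2
  by_cases hg4 : f 3 = 0
  · have htriple : val (vE ε 1) {2, 3, 6} = 10 + ε + ε ^ 6 := by simp [_root_.val, vE]; ring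
    have hbundle : bundle f 0 = {2, 3, 6} :=
      hX.eq_of_val_lt (vE_nonneg hε 1) (by simp [insert_subset_iff, mem_bundle, hg3, hg4, hg7])
        (by linarith [pow_pos hε.1 6])
    have hv1 : val (vE ε 0) {2, 3, 6} = 10 + ε ^ 5 := by simp [_root_.val, vE]; ring
    rw [hbundle, hv1]
  · calc
      _ ≤ val (vE ε 0) {1, 2, 6} :=
        val_bundle_le (vE_nonneg hε 0) (by simp [Fin.forall_fin_succ, hg1, hg4, hg5, hg6])
      _ = 10 - ε ^ 3 + 3 * ε ^ 5 := by simp [_root_.val, vE]; ring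
      _ ≤ _ := by linarith [hlt 3, hlt 4, pow_pos hε.1 3]

theorem val_mul_val_lt_of_agent1_g3_g7_agent2_g1_g5 (hε : ε ∈ Set.Ioo 0 (1 / 10))
    (hX : EFX (vE ε) (bundle f)) (hg1 : f 0 = 1) (hg3 : f 2 = 0) (hg5 : f 4 = 1) (hg6 : f 5 = 2)
    (hg7 : f 6 = 0) :
    val (vE ε 0) (bundle f 0) * val (vE ε 1) (bundle f 1) < (10 + 2 * ε ^ 5) * (10 + ε) := by
  have hg4 : f 3 ≠ 1 := g4_not_agent2_of_agent2_g1_g5 hε hX hg1 hg5 hg6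
  have hv2 : val (vE ε 1) (bundle f 1) ≤ 10 + ε := calc
    _ ≤ val (vE ε 1) {0, 1, 4} :=
      val_bundle_le (vE_nonneg hε 1) (by simp [Fin.forall_fin_succ, hg3, hg4, hg6, hg7])
    _ = _ := by simp [_root_.val, vE]; ring
  have hv1 : val (vE ε 0) (bundle f 0) ≤ 10 + ε ^ 5 :=
    val_bundle_agent1_le_of_agent2_g1_g5 hε hX hg1 hg3 hg5 hg6 hg7 hv2
  refine val_mul_val_lt_of_le (vE_nonneg hε 0) (vE_nonneg hε 1) hv1 hv2 ?_
  linarith [pow_pos hε.1 5, pow_pos hε.1 6]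

theorem g7_not_agent1_of_agent1_g5_agent2_g3 (hε : ε ∈ Set.Ioo 0 (1 / 10))
    (hX : EFX (vE ε) (bundle f)) (hg3 : f 2 = 1) (hg5 : f 4 = 0) (hg6 : f 5 = 2) : f 6 ≠ 0 := by
  intro hg7
  have hlt := pow_succ_lt_pow_mul hε.1 hε.2
  have hbundle₁ : bundle f 0 = {4, 6} := bundle_eq_of_g5_g7 hε hX (by decide) hg5 hg6 hg7
  have hv1 : val (vE ε 0) (bundle f 0) = 10 - 2 * ε ^ 3 + ε ^ 5 := by
    rw [hbundle₁]
    simp [_root_.val, vE]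
  have hval₃ : val (vE ε 0) {2} = 10 - ε ^ 3 := by simp [_root_.val, vE]
  have hval₆ : val (vE ε 0) {5} = 10 + 3 * ε ^ 5 := by simp [_root_.val, vE]
  have hlt₁ : val (vE ε 0) (bundle f 0) < val (vE ε 0) {2} := by
    linarith [hlt 3, hlt 4, pow_pos hε.1 3]
  have hlt₂ : val (vE ε 0) (bundle f 0) < val (vE ε 0) {5} := by
    linarith [pow_pos hε.1 3, pow_pos hε.1 5]
  have hbundle₂ : bundle f 1 = {2} :=
    hX.eq_of_val_lt (vE_nonneg hε 0) (by simp [mem_bundle, hg3]) hlt₁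
  have hbundle₃ : bundle f 2 = {5} :=
    hX.eq_of_val_lt (vE_nonneg hε 0) (by simp [mem_bundle, hg6]) hlt₂
  have hg1 : 0 ∈ bundle f (f 0) := mem_bundle.2 rfl
  generalize f 0 = i at hg1
  fin_cases i <;> simp [hbundle₁, hbundle₂, hbundle₃] at hg1

theorem g1_not_agent2_of_agent2_g3_g7 (hε : ε ∈ Set.Ioo 0 (1 / 10)) (hX : EFX (vE ε) (bundle f))
    (hg3 : f 2 = 1) (hg6 : f 5 = 2) (hg7 : f 6 = 1) : f 0 ≠ 1 := by
  intro hg1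
  have hv1 : val (vE ε 0) (bundle f 0) ≤ 10 - ε ^ 3 + 2 * ε ^ 5 := calc
    _ ≤ val (vE ε 0) {1, 3, 4} :=
      val_bundle_le (vE_nonneg hε 0) (by simp [Fin.forall_fin_succ, hg1, hg3, hg6, hg7])
    _ = _ := by simp [_root_.val, vE]; ring
  have hpair : val (vE ε 0) {0, 2} = 10 + 6 * ε ^ 5 := by simp [_root_.val, vE]; ring
  have hbundle : bundle f 1 = {0, 2} :=
    hX.eq_of_val_lt (vE_nonneg hε 0) (by simp [insert_subset_iff, mem_bundle, hg1, hg3])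
      (by linarith [pow_pos hε.1 3, pow_pos hε.1 5])
  have hmem : 6 ∈ bundle f 1 := mem_bundle.2 hg7
  simp [hbundle] at hmem

theorem val_mul_val_lt_of_agent1_g4_g5_agent2_g3_g7_not_g1 (hε : ε ∈ Set.Ioo 0 (1 / 10))
    (hg1 : f 0 ≠ 1) (hg3 : f 2 = 1) (hg4 : f 3 = 0) (hg5 : f 4 = 0) (hg6 : f 5 = 2)
    (hg7 : f 6 = 1) :
    val (vE ε 0) (bundle f 0) * val (vE ε 1) (bundle f 1) < (10 + 2 * ε ^ 5) * (10 + ε) := by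
  have hlt := pow_succ_lt_pow_mul hε.1 hε.2
  have hv1 : val (vE ε 0) (bundle f 0) ≤ 10 + 2 * ε ^ 3 := calc
    _ ≤ val (vE ε 0) {0, 1, 3, 4} :=
      val_bundle_le (vE_nonneg hε 0) (by simp [Fin.forall_fin_succ, hg3, hg6, hg7])
    _ = 10 + 8 * ε ^ 5 := by simp [_root_.val, vE]; ring
    _ ≤ _ := by linarith [hlt 3, hlt 4, pow_pos hε.1 3]
  have hv2 : val (vE ε 1) (bundle f 1) ≤ 10 + ε - ε ^ 2 := calc
    _ ≤ val (vE ε 1) {1, 2, 6} :=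
      val_bundle_le (vE_nonneg hε 1) (by simp [Fin.forall_fin_succ, hg1, hg4, hg5, hg6])
    _ = 10 + ε - 2 * ε ^ 2 + ε ^ 6 := by simp [_root_.val, vE]; ring
    _ ≤ _ := by linarith [hlt 2, hlt 3, hlt 4, hlt 5, pow_pos hε.1 2]
  exact val_mul_val_lt_of_agent2_deficit hε hv1 hv2

theorem val_mul_val_lt_of_agent1_g5_not_g4_agent2_g3_g7_not_g1 (hε : ε ∈ Set.Ioo 0 (1 / 10))
    (hg1 : f 0 ≠ 1) (hg3 : f 2 = 1) (hg4 : f 3 ≠ 0) (hg5 : f 4 = 0) (hg6 : f 5 = 2)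
    (hg7 : f 6 = 1) :
    val (vE ε 0) (bundle f 0) * val (vE ε 1) (bundle f 1) < (10 + 2 * ε ^ 5) * (10 + ε) := by
  have hlt := pow_succ_lt_pow_mul hε.1 hε.2
  have hv1 : val (vE ε 0) (bundle f 0) ≤ 10 - ε ^ 4 := calc
    _ ≤ val (vE ε 0) {0, 1, 4} :=
      val_bundle_le (vE_nonneg hε 0) (by simp [Fin.forall_fin_succ, hg3, hg4, hg6, hg7])
    _ = 10 - ε ^ 3 + 8 * ε ^ 5 := by simp [_root_.val, vE]; ring
    _ ≤ _ := by linarith [hlt 3, hlt 4, pow_pos hε.1 3]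
  have hv2 : val (vE ε 1) (bundle f 1) ≤ 10 + ε + ε ^ 6 := calc
    _ ≤ val (vE ε 1) {1, 2, 3, 6} :=
      val_bundle_le (vE_nonneg hε 1) (by simp [Fin.forall_fin_succ, hg1, hg5, hg6])
    _ = _ := by simp [_root_.val, vE]; ring
  refine val_mul_val_lt_of_le (vE_nonneg hε 0) (vE_nonneg hε 1) hv1 hv2 ?_
  linarith [hlt 4, hlt 5, pow_pos hε.1 4, pow_pos hε.1 5, pow_pos hε.1 6, pow_pos hε.1 10]

theorem val_agent1_mul_val_agent2_lt (hε : ε ∈ Set.Ioo 0 (1 / 10)) (hX : EFX (vE ε) (bundle f))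
    (hg3g5 : f 2 = 0 ∧ f 4 = 1 ∨ f 2 = 1 ∧ f 4 = 0) (hg6 : f 5 = 2) (hg7 : f 6 ≠ 2) :
    val (vE ε 0) (bundle f 0) * val (vE ε 1) (bundle f 1) < (10 + 2 * ε ^ 5) * (10 + ε) := by
  have hg7_cases : f 6 = 0 ∨ f 6 = 1 := by lia
  rcases hg3g5 with ⟨hg3, hg5⟩ | ⟨hg3, hg5⟩
  · rcases hg7_cases with hg7 | hg7
    · by_cases hg1 : f 0 = 1
      · exact val_mul_val_lt_of_agent1_g3_g7_agent2_g1_g5 hε hX hg1 hg3 hg5 hg6 hg7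
      · have hg3' : f 2 ≠ 1 := by simp [hg3]
        have hg7' : f 6 ≠ 1 := by simp [hg7]
        exact val_mul_val_lt_of_agent2_g5_not_g1_g3_g7 hε hg1 hg3' hg5 hg6 hg7'
    · exact val_mul_val_lt_of_agent2_g5_g7 hε hX hg5 hg6 hg7
  · have hg7 : f 6 = 1 :=
      hg7_cases.resolve_left (g7_not_agent1_of_agent1_g5_agent2_g3 hε hX hg3 hg5 hg6)
    have hg1 : f 0 ≠ 1 := g1_not_agent2_of_agent2_g3_g7 hε hX hg3 hg6 hg7
    by_cases hg4 : f 3 = 0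
    · exact val_mul_val_lt_of_agent1_g4_g5_agent2_g3_g7_not_g1 hε hg1 hg3 hg4 hg5 hg6 hg7
    · exact val_mul_val_lt_of_agent1_g5_not_g4_agent2_g3_g7_not_g1 hε hg1 hg3 hg4 hg5 hg6 hg7

end Instance

/-- For all sufficiently small `ε > 0`: any complete EFX allocation of the ε-instance with
`X'₃ ∩ {g₅,g₆,g₇} = {g₆}` in which `g₃` and `g₅` go one to agent 1 and one to agent 2
has Nash-welfare product below `(10 + 2ε⁵)(10 + ε)·10`. -/
theorem eps_instance_case_only_g6_to_agent3 :
    ∃ ε₀ : ℝ, 0 < ε₀ ∧ ∀ ε : ℝ, 0 < ε → ε < ε₀ →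
      ∀ X' : Fin 3 → Finset (Fin 7),
        (∀ i j, i ≠ j → Disjoint (X' i) (X' j)) →
        X' 0 ∪ X' 1 ∪ X' 2 = Finset.univ →
        EFX (vE ε) X' →
        X' 2 ∩ ({4, 5, 6} : Finset (Fin 7)) = {5} →
        (((2 : Fin 7) ∈ X' 0 ∧ (4 : Fin 7) ∈ X' 1) ∨
          ((2 : Fin 7) ∈ X' 1 ∧ (4 : Fin 7) ∈ X' 0)) →
        val (vE ε 0) (X' 0) * val (vE ε 1) (X' 1) * val (vE ε 2) (X' 2)
          < (10 + 2 * ε ^ 5) * (10 + ε) * 10 := by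
  refine ⟨1 / 10, by norm_num, fun ε hε₀ hε₁ X hdisj hcover hX hX₂ hg3g5 => ?_⟩
  obtain ⟨f, rfl⟩ : ∃ f, X = bundle f := exists_eq_bundle hdisj fun g => by
    simpa [Fin.exists_fin_succ, or_assoc] using hcover.ge (mem_univ g)
  have hX₂' (g : Fin 7) (hg : g ∈ ({4, 5, 6} : Finset (Fin 7))) : f g = 2 ↔ g = 5 := by
    rw [← mem_bundle, ← mem_singleton, ← hX₂, mem_inter, and_iff_left hg]
  have hg5 : f 4 ≠ 2 := by simp [hX₂']
  have hg6 : f 5 = 2 := by simp [hX₂']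
  have hg7 : f 6 ≠ 2 := by simp [hX₂']
  rw [val_bundle_agent3 hg5 hg6 hg7]
  simp only [mem_bundle] at hg3g5
  exact mul_lt_mul_of_pos_right
    (val_agent1_mul_val_agent2_lt ⟨hε₀, hε₁⟩ hX hg3g5 hg6 hg7) (by norm_num)
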